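/- arXiv:2102.02405 — 2 statements merged into one kernel-verified Lean document; each statement's English description precedes it below -/
import Mathlib

section
/- Every complete flag in ℂ^n lies in the K-orbit of exactly one of the n(n+1)/2 flags F_1, …, F_n and F_{i,j} (1 ≤ i < j ≤ n). In particular, these flags lie in pairwise distinct K-orbits, and every K-orbit on the set of complete flags in ℂ^n contains exactly one of them. -/
open Module Submodule

noncomputable section

/-- `stdVec n m` is the `m`-th standard basis vector of `ℂ^n` (1-indexed); `0` out of range. -/
def stdVec (n m : ℕ) : Fin n → ℂ :=
  if h : 1 ≤ m ∧ m ≤ n then Pi.single (⟨m - 1, by omega⟩ : Fin n) 1 else 0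

/-- `stdSub n k` is the subspace `U_k = span(e_1, …, e_k)` of `ℂ^n`. -/
def stdSub (n k : ℕ) : Submodule ℂ (Fin n → ℂ) :=
  span ℂ (stdVec n '' Set.Icc 1 k)

/-- The action of an invertible linear map of `ℂ^n` on a chain of subspaces. -/
def actFlag (n : ℕ) (g : (Fin n → ℂ) ≃ₗ[ℂ] (Fin n → ℂ))
    (V : ℕ → Submodule ℂ (Fin n → ℂ)) (k : ℕ) : Submodule ℂ (Fin n → ℂ) :=
  Submodule.map g.toLinearMap (V k)

/-- The orbit of the chain `V` under a set `B` of invertible linear maps. -/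
def orbitOf (n : ℕ) (B : Set ((Fin n → ℂ) ≃ₗ[ℂ] (Fin n → ℂ)))
    (V : ℕ → Submodule ℂ (Fin n → ℂ)) : Set (ℕ → Submodule ℂ (Fin n → ℂ)) :=
  {V' | ∃ b ∈ B, actFlag n b V = V'}

/-- A complete flag in `ℂ^n`: `V k` is the `k`-dimensional member for `0 ≤ k ≤ n`;
values above `n` are pinned so that two flags are equal iff they agree in degrees `≤ n`. -/
def IsCompleteFlag (n : ℕ) (V : ℕ → Submodule ℂ (Fin n → ℂ)) : Prop :=
  (∀ k, k ≤ n → finrank ℂ ↥(V k) = k) ∧ (∀ k, V k ≤ V (k + 1)) ∧ (∀ k, n ≤ k → V k = V n)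

/-- The complete flag `(v 1 ⊂ v 2 ⊂ ⋯ ⊂ v n)` spanned by the vectors `v 1, …, v n`. -/
def flagOf (n : ℕ) (v : ℕ → Fin n → ℂ) (k : ℕ) : Submodule ℂ (Fin n → ℂ) :=
  span ℂ (v '' Set.Icc 1 (min k n))

/-- `K = {g ∈ GL(n,ℂ) : g e_n = e_n, g U_{n-1} = U_{n-1}}`, a copy of `GL(n-1,ℂ)`. -/
def Ksub (n : ℕ) : Set ((Fin n → ℂ) ≃ₗ[ℂ] (Fin n → ℂ)) :=
  {g | g (stdVec n n) = stdVec n n ∧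
       Submodule.map g.toLinearMap (stdSub n (n - 1)) = stdSub n (n - 1)}

/-- `V'` lies in the `K`-orbit of `V`. -/
def InKOrbit (n : ℕ) (V V' : ℕ → Submodule ℂ (Fin n → ℂ)) : Prop :=
  ∃ g ∈ Ksub n, actFlag n g V = V'

/-- Vectors of the representative flags: for `i = j` this gives the flag `F_i`
`(e_1 ⊂ ⋯ ⊂ e_{i-1} ⊂ e_n ⊂ e_i ⊂ ⋯ ⊂ e_{n-1})` (`e_n` in position `i`), and for
`i < j` the flag `F_{i,j}`
`(e_1 ⊂ ⋯ ⊂ e_{i-1} ⊂ e_i + e_n ⊂ e_{i+1} ⊂ ⋯ ⊂ e_{j-1} ⊂ e_n ⊂ e_j ⊂ ⋯ ⊂ e_{n-1})`. -/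
def repVec (n i j m : ℕ) : Fin n → ℂ :=
  if m < i then stdVec n m
  else if m = i then (if i < j then stdVec n i else 0) + stdVec n n
  else if m < j then stdVec n m
  else if m = j then stdVec n n
  else stdVec n (m - 1)

/-- `repFlag n i i = F_i` and `repFlag n i j = F_{i,j}` for `i < j`. -/
def repFlag (n i j : ℕ) : ℕ → Submodule ℂ (Fin n → ℂ) := flagOf n (repVec n i j)

/-!
Let `φ` be the last coordinate, so that `ℂ^n = ker φ ⊕ ℂ e_n` and `K` is the group preserving both
`ker φ` and `e_n`. Attached to a flag `V` are the first index `i` with `V i ⊄ ker φ` and the first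
index `j` with `e_n ∈ V j`; both are `K`-invariant, and `i ≤ j`. Subtracting multiples of a vector
of `V i` on which `φ` is `1`, one finds a basis `v` spanning `V` with `v j = e_n`, with
`φ (v i) = 1`, and with `φ (v m) = 0` for every other `m`. The linear map matching two such bases
with the same `(i, j)` fixes `e_n` and preserves `φ`, so it lies in `K`. The vectors defining
`F_i` and `F_{i,j}` are such bases, one for each pair.
-/

section LinearAlgebra

theorem exists_linearEquiv_of_linearIndepOn {R M M' ι : Type*} [Semiring R] [AddCommMonoid M]
    [Module R M] [AddCommMonoid M'] [Module R M'] {s : Set ι} {v : ι → M} {w : ι → M'}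
    (hv : LinearIndepOn R v s) (hv_top : span R (v '' s) = ⊤)
    (hw : LinearIndepOn R w s) (hw_top : span R (w '' s) = ⊤) :
    ∃ g : M ≃ₗ[R] M', ∀ m ∈ s, g (v m) = w m := by
  rw [Set.image_eq_range] at hv_top hw_top
  let b := Basis.mk hv hv_top.ge
  let c := Basis.mk hw hw_top.ge
  refine ⟨b.equiv c (Equiv.refl s), fun m hm => ?_⟩
  have hb : b ⟨m, hm⟩ = v m := Basis.mk_apply hv hv_top.ge ⟨m, hm⟩
  have hc : c ⟨m, hm⟩ = w m := Basis.mk_apply hw hw_top.ge ⟨m, hm⟩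
  rw [← hb, ← hc, b.equiv_apply, Equiv.refl_apply]

variable {F E : Type*} [DivisionRing F] [AddCommGroup E] [Module F E]
  {φ : E →ₗ[F] F} {A B : Submodule F E}

theorem linearIndepOn_of_span_image_eq_top {ι : Type*} {s : Set ι} [Fintype s] {v : ι → E}
    (hv : span F (v '' s) = ⊤) (hs : Fintype.card s = finrank F E) : LinearIndepOn F v s := by
  rw [Set.image_eq_range] at hv
  exact linearIndependent_of_top_le_span_of_card_eq_finrank hv.ge hs

theorem span_singleton_sup_eq_of_covBy (hAB : A ⋖ B) {x : E} (hx : x ∈ B)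
    (hxA : x ∉ A) : span F {x} ⊔ A = B :=
  (hAB.eq_or_eq le_sup_right (sup_le ((span_singleton_le_iff_mem x B).2 hx) hAB.le)).resolve_left
    (covBy_span_singleton_sup hxA).ne'

theorem exists_mem_apply_eq_one (hB : ¬ B ≤ LinearMap.ker φ) :
    ∃ x ∈ B, φ x = 1 := by
  obtain ⟨x, hx, hφx⟩ := SetLike.not_le_iff_exists.1 hB
  exact ⟨(φ x)⁻¹ • x, smul_mem _ _ hx, by simpa using inv_mul_cancel₀ hφx⟩

theorem exists_mem_ker_notMem (hAB : A < B)
    (h : B ≤ LinearMap.ker φ ∨ ¬ A ≤ LinearMap.ker φ) : ∃ x ∈ B, x ∉ A ∧ φ x = 0 := by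
  obtain ⟨x, hxB, hxA⟩ := SetLike.exists_of_lt hAB
  rcases h with hB | hA
  · exact ⟨x, hxB, hxA, hB hxB⟩
  · obtain ⟨y, hyA, hy⟩ := exists_mem_apply_eq_one hA
    refine ⟨x - φ x • y, sub_mem hxB (smul_mem _ _ (hAB.le hyA)), ?_, by simp [hy]⟩
    rwa [A.sub_mem_iff_left (smul_mem _ _ hyA)]

end LinearAlgebra

section AdaptedFrames

variable {F E : Type*} [DivisionRing F] [AddCommGroup E] [Module F E]
  {φ : E →ₗ[F] F} {e : E} {U : Submodule F E} {V : ℕ → Submodule F E} {v w : ℕ → E}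
  {n i j i' j' : ℕ}

/-- A complete flag as a saturated chain `⊥ = V 0 ⋖ V 1 ⋖ ⋯ ⋖ V n = ⊤`, continued by `⊤`. -/
structure IsSaturatedFlag (n : ℕ) (V : ℕ → Submodule F E) : Prop where
  eq_bot : V 0 = ⊥
  covBy : ∀ k < n, V k ⋖ V (k + 1)
  eq_top : ∀ k, n ≤ k → V k = ⊤

/-- The position of a chain `V` relative to a decomposition `E = U ⊕ F e`: `i` is the first index
at which `V` leaves `U`, and `j` the first index at which it contains `e`. -/
structure HasPosition (U : Submodule F E) (e : E) (V : ℕ → Submodule F E) (i j : ℕ) : Prop where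
  le_iff : ∀ k, V k ≤ U ↔ k < i
  mem_iff : ∀ k, e ∈ V k ↔ j ≤ k

/-- A basis `v 1, …, v n` in normal form of type `(i, j)` with respect to `E = ker φ ⊕ F e`:
`v j` is `e`, and all the other vectors lie in `ker φ`, except that `φ (v i) = 1`. -/
structure IsAdaptedFrame (φ : E →ₗ[F] F) (e : E) (n i j : ℕ) (v : ℕ → E) : Prop where
  one_le : 1 ≤ i
  le : i ≤ j
  le_dim : j ≤ n
  linearIndepOn : LinearIndepOn F v (Set.Icc 1 n)
  span_eq_top : span F (v '' Set.Icc 1 n) = ⊤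
  eq_vec : v j = e
  apply_eq : ∀ m ∈ Set.Icc 1 n, φ (v m) = if m = i ∨ m = j then 1 else 0

theorem HasPosition.unique (h : HasPosition U e V i j) (h' : HasPosition U e V i' j') :
    i = i' ∧ j = j' := by
  have hi (k : ℕ) : k < i ↔ k < i' := (h.le_iff k).symm.trans (h'.le_iff k)
  have hj (k : ℕ) : j ≤ k ↔ j' ≤ k := (h.mem_iff k).symm.trans (h'.mem_iff k)
  exact ⟨eq_of_forall_lt_iff hi, eq_of_forall_ge_iff hj⟩

theorem HasPosition.map (h : HasPosition U e V i j) {g : E ≃ₗ[F] E} (hge : g e = e)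
    (hgU : U.map g.toLinearMap = U) :
    HasPosition U e (fun k => (V k).map g.toLinearMap) i j where
  le_iff k := by
    rw [← h.le_iff k]
    conv_lhs => rw [← hgU]
    exact map_le_map_iff_of_injective g.injective _ _
  mem_iff k := by
    rw [← h.mem_iff k]
    conv_lhs => rw [← hge]
    exact g.injective.mem_set_image

theorem IsSaturatedFlag.monotone (hV : IsSaturatedFlag n V) : Monotone V := by
  refine monotone_nat_of_le_succ fun k => ?_
  rcases lt_or_ge k n with hk | hk
  · exact (hV.covBy k hk).le
  · exact (hV.eq_top (k + 1) (by omega)).symm ▸ le_top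

theorem IsSaturatedFlag.exists_hasPosition (hV : IsSaturatedFlag n V) (he : e ∉ U) :
    ∃ i j, 1 ≤ i ∧ i ≤ j ∧ j ≤ n ∧ HasPosition U e V i j := by
  classical
  have he_top : e ∈ V n := hV.eq_top n le_rfl ▸ mem_top
  have exists_mem : ∃ k, e ∈ V k := ⟨n, he_top⟩
  have exists_not_le : ∃ k, ¬ V k ≤ U := ⟨n, fun h => he (h he_top)⟩
  refine ⟨Nat.find exists_not_le, Nat.find exists_mem, ?_, ?_, Nat.find_min' _ he_top, ?_, ?_⟩
  · simp [hV.eq_bot]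
  · exact Nat.find_min' _ fun h => he (h (Nat.find_spec exists_mem))
  · refine fun k => ⟨fun h => ?_, fun h => not_not.1 (Nat.find_min exists_not_le h)⟩
    by_contra! hk
    exact Nat.find_spec exists_not_le ((hV.monotone hk).trans h)
  · exact fun k => ⟨Nat.find_min' exists_mem, fun h => hV.monotone h (Nat.find_spec exists_mem)⟩

theorem IsSaturatedFlag.span_image_Icc (hV : IsSaturatedFlag n V)
    (hv : ∀ k < n, v (k + 1) ∈ V (k + 1) ∧ v (k + 1) ∉ V k) {k : ℕ} (hk : k ≤ n) :
    span F (v '' Set.Icc 1 k) = V k := by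
  induction k with
  | zero => simp [hV.eq_bot]
  | succ k ih =>
    rw [← Set.insert_Icc_right_eq_Icc_add_one (by omega), Set.image_insert_eq, span_insert,
      ih (by omega)]
    exact span_singleton_sup_eq_of_covBy (hV.covBy k hk) (hv k hk).1 (hv k hk).2

theorem IsSaturatedFlag.linearIndepOn_Icc (hV : IsSaturatedFlag n V)
    (hv : ∀ k < n, v (k + 1) ∈ V (k + 1) ∧ v (k + 1) ∉ V k) {k : ℕ} (hk : k ≤ n) :
    LinearIndepOn F v (Set.Icc 1 k) := by
  induction k with
  | zero => simp
  | succ k ih =>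
    rw [← Set.insert_Icc_right_eq_Icc_add_one (by omega), linearIndepOn_insert (by simp),
      hV.span_image_Icc hv (by omega)]
    exact ⟨ih (by omega), (hv k hk).2⟩

theorem HasPosition.exists_adapted_vector (hV : IsSaturatedFlag n V)
    (hpos : HasPosition (LinearMap.ker φ) e V i j) (he : φ e = 1) {k : ℕ} (hk : k < n) :
    ∃ x, (x ∈ V (k + 1) ∧ x ∉ V k) ∧ (k + 1 = j → x = e) ∧
      φ x = if k + 1 = i ∨ k + 1 = j then 1 else 0 := by
  by_cases hkj : k + 1 = j
  · refine ⟨e, ⟨(hpos.mem_iff _).2 hkj.ge, fun h => ?_⟩, fun _ => rfl, by simp [hkj, he]⟩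
    have := (hpos.mem_iff k).1 h
    omega
  by_cases hki : k + 1 = i
  · obtain ⟨x, hx, hφx⟩ := exists_mem_apply_eq_one (mt (hpos.le_iff (k + 1)).1 hki.not_lt)
    refine ⟨x, ⟨hx, fun h => ?_⟩, fun h => absurd h hkj, by simp [hki, hφx]⟩
    have : φ x = 0 := (hpos.le_iff k).2 (by omega) h
    simp [hφx] at this
  · have hker : V (k + 1) ≤ LinearMap.ker φ ∨ ¬ V k ≤ LinearMap.ker φ := by
      rw [hpos.le_iff, hpos.le_iff]
      omega
    obtain ⟨x, hx, hxk, hφx⟩ := exists_mem_ker_notMem (hV.covBy k hk).lt hker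
    exact ⟨x, ⟨hx, hxk⟩, fun h => absurd h hkj, by simp [hki, hkj, hφx]⟩

theorem IsSaturatedFlag.exists_isAdaptedFrame (hV : IsSaturatedFlag n V) (he : φ e = 1) :
    ∃ i j v, IsAdaptedFrame φ e n i j v ∧ ∀ k ≤ n, span F (v '' Set.Icc 1 k) = V k := by
  obtain ⟨i, j, hi, hij, hj, hpos⟩ :=
    hV.exists_hasPosition (U := LinearMap.ker φ) (e := e) (by simp [he])
  choose! u hu hue hφu using fun k (hk : k < n) => hpos.exists_adapted_vector hV he hk
  have hspan {k : ℕ} (hk : k ≤ n) := hV.span_image_Icc (v := fun m => u (m - 1)) hu hk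
  refine ⟨i, j, fun m => u (m - 1), ⟨hi, hij, hj, hV.linearIndepOn_Icc hu le_rfl,
    (hspan le_rfl).trans (hV.eq_top n le_rfl), hue _ (by omega) (by omega), ?_⟩,
    fun k hk => hspan hk⟩
  rintro m ⟨hm, hmn⟩
  simpa [Nat.sub_add_cancel hm] using hφu (m - 1) (by omega)

theorem IsAdaptedFrame.span_le_ker_iff (hv : IsAdaptedFrame φ e n i j v) {k : ℕ} :
    span F (v '' Set.Icc 1 (min k n)) ≤ LinearMap.ker φ ↔ k < i := by
  obtain ⟨hi, hij, hj⟩ := And.intro hv.one_le (And.intro hv.le hv.le_dim)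
  rw [span_le, Set.image_subset_iff]
  constructor
  · intro h
    by_contra! hk
    have : φ (v i) = 0 := h ⟨hi, by omega⟩
    simp [hv.apply_eq i ⟨hi, by omega⟩] at this
  · rintro hk m ⟨hm, hmk⟩
    have : ¬ (m = i ∨ m = j) := by omega
    simp [hv.apply_eq m ⟨hm, by omega⟩, this]

theorem IsAdaptedFrame.mem_span_iff (hv : IsAdaptedFrame φ e n i j v) {k : ℕ} :
    e ∈ span F (v '' Set.Icc 1 (min k n)) ↔ j ≤ k := by
  have hj : j ∈ Set.Icc 1 n := ⟨hv.one_le.trans hv.le, hv.le_dim⟩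
  have hsub : Set.Icc 1 (min k n) ⊆ Set.Icc 1 n := Set.Icc_subset_Icc_right (min_le_right _ _)
  rw [← hv.eq_vec, (hv.linearIndepOn.mono hsub).mem_span_iff,
    imp_iff_right (hv.linearIndepOn.mono (Set.insert_subset hj hsub))]
  simp [hj.1, hj.2]

theorem IsAdaptedFrame.hasPosition (hv : IsAdaptedFrame φ e n i j v) :
    HasPosition (LinearMap.ker φ) e (fun k => span F (v '' Set.Icc 1 (min k n))) i j :=
  ⟨fun _ => hv.span_le_ker_iff, fun _ => hv.mem_span_iff⟩

theorem IsAdaptedFrame.exists_linearEquiv (hv : IsAdaptedFrame φ e n i j v)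
    (hw : IsAdaptedFrame φ e n i j w) :
    ∃ g : E ≃ₗ[F] E, g e = e ∧ (LinearMap.ker φ).map g.toLinearMap = LinearMap.ker φ ∧
      ∀ m ∈ Set.Icc 1 n, g (v m) = w m := by
  obtain ⟨g, hg⟩ := exists_linearEquiv_of_linearIndepOn hv.linearIndepOn hv.span_eq_top
    hw.linearIndepOn hw.span_eq_top
  have hφg : φ ∘ₗ g.toLinearMap = φ := by
    refine LinearMap.ext_on hv.span_eq_top ?_
    rintro _ ⟨m, hm, rfl⟩
    simp [hg m hm, hv.apply_eq m hm, hw.apply_eq m hm]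
  refine ⟨g, ?_, ?_, hg⟩
  · simpa [hv.eq_vec, hw.eq_vec] using hg j ⟨hv.one_le.trans hv.le, hv.le_dim⟩
  · conv_lhs => rw [← hφg, LinearMap.ker_comp]
    exact map_comap_eq_of_surjective g.surjective _

end AdaptedFrames

section StandardVectors

variable {n i j m : ℕ}

/-- The linear form `x ↦ x_n` on `ℂ^n`; in the 0-indexed `Fin n` the last index is `⊤`. -/
def lastCoord (n : ℕ) [NeZero n] : (Fin n → ℂ) →ₗ[ℂ] ℂ := LinearMap.proj ⊤

theorem stdVec_add_one (a : Fin n) : stdVec n (a + 1) = Pi.single a 1 := by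
  have : 1 ≤ (a : ℕ) + 1 ∧ (a : ℕ) + 1 ≤ n := by omega
  simp [stdVec, this]

theorem lastCoord_stdVec [NeZero n] : lastCoord n (stdVec n m) = if m = n then 1 else 0 := by
  have hn := NeZero.pos n
  by_cases hm : 1 ≤ m ∧ m ≤ n
  · simp only [lastCoord, stdVec, hm, and_self, dite_true, LinearMap.proj_apply, Pi.single_apply,
      Fin.ext_iff, Fin.val_top]
    congr 1
    simp only [eq_iff_iff]
    omega
  · have : m ≠ n := by omega
    simp [stdVec, hm, this]

theorem sum_smul_stdVec (x : Fin n → ℂ) : ∑ a : Fin n, x a • stdVec n (a + 1) = x := by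
  simpa only [stdVec_add_one] using (pi_eq_sum_univ' x).symm

theorem span_stdVec_image_Icc : span ℂ (stdVec n '' Set.Icc 1 n) = ⊤ := by
  refine eq_top_iff'.2 fun x => sum_smul_stdVec x ▸ sum_mem fun a _ => ?_
  exact smul_mem _ _ (subset_span ⟨a + 1, ⟨by omega, by omega⟩, rfl⟩)

theorem stdSub_pred_eq_ker_lastCoord [NeZero n] :
    stdSub n (n - 1) = LinearMap.ker (lastCoord n) := by
  apply le_antisymm
  · refine span_le.2 ?_
    rintro _ ⟨m, ⟨hm, hmn⟩, rfl⟩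
    have : m ≠ n := by omega
    simp [lastCoord_stdVec, this]
  · intro x hx
    rw [← sum_smul_stdVec x]
    refine sum_mem fun a _ => ?_
    by_cases ha : (a : ℕ) = n - 1
    · obtain rfl : a = ⊤ := Fin.ext (by simpa using ha)
      have : x ⊤ = 0 := hx
      simp [this]
    · exact smul_mem _ _ (subset_span ⟨a + 1, ⟨by omega, by omega⟩, rfl⟩)

theorem repVec_right (hij : i ≤ j) : repVec n i j j = stdVec n n := by
  unfold repVec
  split_ifs <;> first | omega | simp

theorem lastCoord_repVec [NeZero n] (hij : i ≤ j) (hj : j ≤ n) (hmn : m ≤ n) :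
    lastCoord n (repVec n i j m) = if m = i ∨ m = j then 1 else 0 := by
  unfold repVec
  split_ifs <;> simp only [map_add, map_zero, lastCoord_stdVec] <;> grind

theorem stdVec_mem_span_repVec (hi : 1 ≤ i) (hij : i ≤ j) (hj : j ≤ n) (hm : m ∈ Set.Icc 1 n) :
    stdVec n m ∈ span ℂ (repVec n i j '' Set.Icc 1 n) := by
  obtain ⟨hm, hmn⟩ := hm
  have mem_span {l : ℕ} (hl : 1 ≤ l) (hln : l ≤ n) :
      repVec n i j l ∈ span ℂ (repVec n i j '' Set.Icc 1 n) :=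
    subset_span ⟨l, ⟨hl, hln⟩, rfl⟩
  have last_mem : stdVec n n ∈ span ℂ (repVec n i j '' Set.Icc 1 n) :=
    repVec_right (n := n) hij ▸ mem_span (hi.trans hij) hj
  rcases hmn.eq_or_lt with rfl | hmn
  · exact last_mem
  rcases lt_or_ge m j with hmj | hjm
  · by_cases hmi : m = i
    · have : repVec n i j m = stdVec n m + stdVec n n := by simp [repVec, hmi, hmi ▸ hmj]
      exact ((span ℂ _).add_mem_iff_left last_mem).1 (this ▸ mem_span hm hmn.le)
    · have : repVec n i j m = stdVec n m := by simp [repVec, hmi, hmj]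
      exact this ▸ mem_span hm hmn.le
  · have : repVec n i j (m + 1) = stdVec n m := by
      unfold repVec
      split_ifs <;> first | omega | simp
    exact this ▸ mem_span (by omega) hmn

theorem isAdaptedFrame_repVec [NeZero n] (hi : 1 ≤ i) (hij : i ≤ j) (hj : j ≤ n) :
    IsAdaptedFrame (lastCoord n) (stdVec n n) n i j (repVec n i j) := by
  have span_eq_top : span ℂ (repVec n i j '' Set.Icc 1 n) = ⊤ := by
    rw [eq_top_iff, ← span_stdVec_image_Icc, span_le, Set.image_subset_iff]
    exact fun m hm => stdVec_mem_span_repVec hi hij hj hm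
  exact ⟨hi, hij, hj, linearIndepOn_of_span_image_eq_top span_eq_top (by simp), span_eq_top,
    repVec_right hij, fun m hm => lastCoord_repVec hij hj hm.2⟩

end StandardVectors

section Orbits

variable {n i j : ℕ} {V W : ℕ → Submodule ℂ (Fin n → ℂ)} {v w : ℕ → Fin n → ℂ}

theorem IsCompleteFlag.isSaturatedFlag (hV : IsCompleteFlag n V) : IsSaturatedFlag n V := by
  obtain ⟨hdim, hle, htop⟩ := hV
  refine ⟨finrank_eq_zero.1 (hdim 0 n.zero_le), fun k hk => ⟨?_, fun W hkW hWk => ?_⟩,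
    fun k hk => ?_⟩
  · refine (hle k).lt_of_ne fun h => ?_
    have := hdim (k + 1) hk
    rw [← h, hdim k hk.le] at this
    omega
  · have hlt := finrank_lt_finrank_of_lt hkW
    have hgt := finrank_lt_finrank_of_lt hWk
    rw [hdim k hk.le] at hlt
    rw [hdim (k + 1) hk] at hgt
    omega
  · rw [htop k hk]
    exact eq_top_of_finrank_eq (by simp [hdim n le_rfl])

theorem IsCompleteFlag.exists_flagOf_eq [NeZero n] (hV : IsCompleteFlag n V) :
    ∃ i j v, IsAdaptedFrame (lastCoord n) (stdVec n n) n i j v ∧ flagOf n v = V := by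
  obtain ⟨i, j, v, hv, hspan⟩ := hV.isSaturatedFlag.exists_isAdaptedFrame
    (φ := lastCoord n) (e := stdVec n n) (by simp [lastCoord_stdVec])
  refine ⟨i, j, v, hv, funext fun k => (hspan _ (min_le_right k n)).trans ?_⟩
  rcases le_total k n with hk | hk
  · rw [min_eq_left hk]
  · rw [min_eq_right hk, hV.2.2 k hk]

theorem IsAdaptedFrame.inKOrbit [NeZero n]
    (hv : IsAdaptedFrame (lastCoord n) (stdVec n n) n i j v)
    (hw : IsAdaptedFrame (lastCoord n) (stdVec n n) n i j w) :
    InKOrbit n (flagOf n v) (flagOf n w) := by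
  obtain ⟨g, hge, hgker, hg⟩ := hv.exists_linearEquiv hw
  refine ⟨g, ⟨hge, by rwa [stdSub_pred_eq_ker_lastCoord]⟩, funext fun k => ?_⟩
  simp only [actFlag, flagOf, map_span, Set.image_image]
  congr 1
  exact Set.image_congr fun m hm => hg m ⟨hm.1, hm.2.trans (min_le_right k n)⟩

theorem HasPosition.of_inKOrbit (hW : HasPosition (stdSub n (n - 1)) (stdVec n n) W i j)
    (h : InKOrbit n W V) :
    HasPosition (stdSub n (n - 1)) (stdVec n n) V i j := by
  obtain ⟨g, ⟨hge, hgU⟩, rfl⟩ := h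
  exact hW.map hge hgU

theorem IsAdaptedFrame.hasPosition_flagOf [NeZero n]
    (hv : IsAdaptedFrame (lastCoord n) (stdVec n n) n i j v) :
    HasPosition (stdSub n (n - 1)) (stdVec n n) (flagOf n v) i j :=
  stdSub_pred_eq_ker_lastCoord (n := n) ▸ hv.hasPosition

end Orbits

/-- Every complete flag in `ℂ^n` lies in the `K`-orbit of exactly one of the flags
`F_i = repFlag n i i` (`1 ≤ i ≤ n`) and `F_{i,j} = repFlag n i j` (`1 ≤ i < j ≤ n`). -/
theorem stmt_1 (n : ℕ) (hn : 2 ≤ n) (V : ℕ → Submodule ℂ (Fin n → ℂ))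
    (hV : IsCompleteFlag n V) :
    ∃! p : ℕ × ℕ, (1 ≤ p.1 ∧ p.1 ≤ p.2 ∧ p.2 ≤ n) ∧ InKOrbit n (repFlag n p.1 p.2) V := by
  have : NeZero n := ⟨by omega⟩
  obtain ⟨i, j, v, hv, rfl⟩ := hV.exists_flagOf_eq
  refine ⟨(i, j), ⟨⟨hv.one_le, hv.le, hv.le_dim⟩,
    (isAdaptedFrame_repVec hv.one_le hv.le hv.le_dim).inKOrbit hv⟩, ?_⟩
  rintro ⟨i', j'⟩ ⟨⟨hi', hij', hj'⟩, horbit⟩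
  have hpos' := (isAdaptedFrame_repVec hi' hij' hj').hasPosition_flagOf.of_inKOrbit horbit
  exact Prod.ext_iff.2 (hpos'.unique hv.hasPosition_flagOf)
end
end

section
/- Every maximal isotropic flag in ℂ^{2l+1} lies in the K-orbit of exactly one of the l+2 flags F_+, F_-, F_0, F_1, …, F_{l-1}. In particular these flags lie in pairwise distinct K-orbits and every K-orbit contains exactly one of them. -/
open Module Submodule

noncomputable section

/-- The symmetric bilinear form `β(x,y) = ∑_{k=1}^n x_k y_{n+1-k}` on `ℂ^n`. -/
def betaF (n : ℕ) (x y : Fin n → ℂ) : ℂ := ∑ k : Fin n, x k * y k.rev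

/-- `SO(n,ℂ)` for the form `β`. -/
def SOgrp (n : ℕ) : Set ((Fin n → ℂ) ≃ₗ[ℂ] (Fin n → ℂ)) :=
  {g | LinearMap.det g.toLinearMap = 1 ∧ ∀ x y, betaF n (g x) (g y) = betaF n x y}

/-- A maximal isotropic flag `V 1 ⊂ ⋯ ⊂ V l` in `ℂ^n` (values pinned outside `1..l`
so that two flags are equal iff they agree in degrees `1, …, l`). -/
def IsIsoFlag (n l : ℕ) (V : ℕ → Submodule ℂ (Fin n → ℂ)) : Prop :=
  (∀ i, i ≤ l → finrank ℂ ↥(V i) = i) ∧ (∀ i, V i ≤ V (i + 1)) ∧ (∀ i, l ≤ i → V i = V l) ∧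
    (∀ u ∈ V l, ∀ w ∈ V l, betaF n u w = 0)

/-- The isotropic flag `(v 1 ⊂ ⋯ ⊂ v l)` spanned by `v 1, …, v l`. -/
def isoFlagOf (n l : ℕ) (v : ℕ → Fin n → ℂ) (k : ℕ) : Submodule ℂ (Fin n → ℂ) :=
  span ℂ (v '' Set.Icc 1 (min k l))

/-- `K = {g ∈ SO(2l+1) : g e_0 = e_0}` (here `e_0 = e_{l+1}`), a copy of `SO(2l)`. -/
def Kodd (l : ℕ) : Set ((Fin (2 * l + 1) → ℂ) ≃ₗ[ℂ] (Fin (2 * l + 1) → ℂ)) :=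
  {g | g ∈ SOgrp (2 * l + 1) ∧
       g (stdVec (2 * l + 1) (l + 1)) = stdVec (2 * l + 1) (l + 1)}

/-- `V'` lies in the `K`-orbit of `V`. -/
def InKOddOrbit (l : ℕ) (V V' : ℕ → Submodule ℂ (Fin (2 * l + 1) → ℂ)) : Prop :=
  ∃ g ∈ Kodd l, actFlag (2 * l + 1) g V = V'

/-- The vector `e_l + √2 ı e_0 + e_{-l}` in `ℂ^{2l+1}`. -/
def wvec (l : ℕ) : Fin (2 * l + 1) → ℂ :=
  stdVec (2 * l + 1) l + ((Real.sqrt 2 : ℂ) * Complex.I) • stdVec (2 * l + 1) (l + 1) +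
    stdVec (2 * l + 1) (l + 2)

/-- Representatives of the `K`-orbits: for `i ≤ l - 1` this gives the flag `F_i`
`(e_1 ⊂ ⋯ ⊂ e_i ⊂ e_l + √2 ı e_0 + e_{-l} ⊂ e_{i+1} ⊂ ⋯ ⊂ e_{l-1})`, for `i = l` the
flag `F_+ = (e_1 ⊂ ⋯ ⊂ e_l)`, and for `i = l + 1` the flag
`F_- = (e_1 ⊂ ⋯ ⊂ e_{l-1} ⊂ e_{-l})`. -/
def repSOVec (l i m : ℕ) : Fin (2 * l + 1) → ℂ :=
  if i ≤ l - 1 then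
    (if m ≤ i then stdVec (2 * l + 1) m
     else if m = i + 1 then wvec l
     else stdVec (2 * l + 1) (m - 1))
  else if i = l then stdVec (2 * l + 1) m
  else if m ≤ l - 1 then stdVec (2 * l + 1) m else stdVec (2 * l + 1) (l + 2)

def repSOFlag (l i : ℕ) : ℕ → Submodule ℂ (Fin (2 * l + 1) → ℂ) :=
  isoFlagOf (2 * l + 1) l (repSOVec l i)

/-!
Over an algebraically closed field of characteristic not two, any two linearly independent
families with the same Gram matrix, in nondegenerate quadratic spaces of the same dimension, are
related by an isometry: both families can be enlarged by one vector with the Gram matrices kept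
equal, adding a vector paired with the radical of the span if there is one and a unit vector
orthogonal to the span otherwise.

Given a maximal isotropic flag `V`, let `i` be the largest index with `V_i ⊆ e_0^⊥`. A basis
adapted to `V` can be chosen with the same products with `e_0` as the basis defining `F_i` (or
`F_+`, if `i = l`): only its `i+1`-st vector pairs with `e_0`, and that product can be scaled to
`√2 ı`. Hence an isometry `g` fixing `e_0` carries that flag to `V`. If `det g = -1`, compose
`g` with the reflection that swaps `e_l` and `e_{-l}`; it fixes `F_0, …, F_{l-1}` and swaps
`F_+` and `F_-`.

The index `i` is a `K`-invariant that separates all the flags except `F_+` and `F_-`. These two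
are not conjugate because an isometry that fixes `e_0` and preserves `F_+` has determinant `1`,
whereas the reflection carrying `F_+` to `F_-` has determinant `-1`.
-/

/-! ### Witt's extension theorem -/

section Witt

open LinearMap (BilinForm)

variable {K E E' : Type*} [Field K] [AddCommGroup E] [Module K E] [AddCommGroup E'] [Module K E']
  {B : BilinForm K E} {B' : BilinForm K E'}

theorem exists_forall_apply_eq_of_linearIndependent [FiniteDimensional K E]
    (hB : B.Nondegenerate) {ι : Type*} {v : ι → E} (hv : LinearIndependent K v) (c : ι → K) :
    ∃ x, ∀ i, B x (v i) = c i := by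
  obtain ⟨φ, hφ⟩ := LinearMap.exists_extend ((Basis.span hv).constr K c)
  refine ⟨(B.toDual hB).symm φ, fun i => ?_⟩
  have hφv := LinearMap.congr_fun hφ (Basis.span hv i)
  rw [Basis.constr_basis] at hφv
  simpa [BilinForm.apply_toDual_symm_apply, Basis.span_apply] using hφv

theorem exists_isotropic_notMem_span_apply_eq [FiniteDimensional K E] [NeZero (2 : K)]
    (hB : B.Nondegenerate) (hs : B.IsSymm) {ι : Type*} [Fintype ι] {v : ι → E}
    (hv : LinearIndependent K v) {a c : ι → K}
    (ha : ∀ i, B (∑ j, a j • v j) (v i) = 0) (hac : ∑ i, a i * c i = 1) :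
    ∃ x ∉ span K (Set.range v), (∀ i, B x (v i) = c i) ∧ B x x = 0 := by
  set r := ∑ j, a j • v j with hr
  obtain ⟨y, hy⟩ := exists_forall_apply_eq_of_linearIndependent hB hv c
  have hr_mem : r ∈ span K (Set.range v) :=
    sum_mem fun j _ => smul_mem _ _ (subset_span (Set.mem_range_self j))
  have hr_span : ∀ u ∈ span K (Set.range v), B r u = 0 := fun u hu =>
    (span_le (p := LinearMap.ker (B r))).2 (Set.range_subset_iff.2 ha) hu
  have hyr : B y r = 1 := by simp [hr, hy, hac]
  have hry : B r y = 1 := by rw [hs.eq, hyr]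
  have hrr : B r r = 0 := hr_span r hr_mem
  refine ⟨y - (B y y / 2) • r, fun hmem => ?_, fun i => by simp [hy, ha], ?_⟩
  · simpa [hry, hrr] using hr_span _ hmem
  · simp only [map_sub, map_smul, LinearMap.sub_apply, LinearMap.smul_apply, smul_eq_mul, hyr, hry,
      hrr]
    field_simp
    ring

theorem exists_mem_orthogonal_apply_self_eq_one [FiniteDimensional K E] [IsAlgClosed K]
    [NeZero (2 : K)] (hB : B.Nondegenerate) (hs : B.IsSymm) {W : Submodule K E}
    (hW : Disjoint W (B.orthogonal W)) (hW' : W ≠ ⊤) : ∃ x ∈ B.orthogonal W, B x x = 1 := by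
  have : Invertible (2 : K) := invertibleOfNonzero two_ne_zero
  have hcompl : IsCompl W (B.orthogonal W) :=
    (BilinForm.isCompl_orthogonal_iff_disjoint hs.isRefl).2 hW
  have : Nontrivial (B.orthogonal W) := by
    rw [nontrivial_iff_ne_bot]
    exact fun h => hW' (by simpa [h] using hcompl.sup_eq_top)
  have hnondeg : (B.restrict (B.orthogonal W)).Nondegenerate :=
    B.nondegenerate_restrict_of_disjoint_orthogonal hs.isRefl
      (by rw [BilinForm.orthogonal_orthogonal hB hs.isRefl]; exact hW.symm)
  obtain ⟨y, hy⟩ := LinearMap.BilinForm.exists_bilinForm_self_ne_zero hnondeg.ne_zero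
    (BilinForm.isSymm_iff.1 (hs.restrict _))
  obtain ⟨z, hz⟩ := IsAlgClosed.exists_eq_mul_self (B y y)⁻¹
  refine ⟨z • y, smul_mem _ _ y.2, ?_⟩
  have hy' : B y y ≠ 0 := hy
  simp only [map_smul, LinearMap.smul_apply, smul_eq_mul]
  rw [← mul_assoc, ← hz, inv_mul_cancel₀ hy']

theorem exists_unit_notMem_span_apply_eq_zero [FiniteDimensional K E] [IsAlgClosed K]
    [NeZero (2 : K)] (hB : B.Nondegenerate) (hs : B.IsSymm) {ι : Type*} [Fintype ι] {v : ι → E}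
    (hv : ∀ a : ι → K, (∀ i, B (∑ j, a j • v j) (v i) = 0) → a = 0)
    (hcard : Fintype.card ι < finrank K E) :
    ∃ x ∉ span K (Set.range v), (∀ i, B x (v i) = 0) ∧ B x x = 1 := by
  have hdisj : Disjoint (span K (Set.range v)) (B.orthogonal (span K (Set.range v))) := by
    rw [disjoint_def]
    intro u hu hu'
    obtain ⟨a, rfl⟩ := mem_span_range_iff_exists_fun K |>.1 hu
    have ha : a = 0 := hv a fun i =>
      (hs.eq _ _).symm.trans (hu' _ (subset_span (Set.mem_range_self i)))
    simp [ha]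
  have htop : span K (Set.range v) ≠ ⊤ := fun h => by
    have hle := finrank_range_le_card (R := K) (b := v)
    rw [Set.finrank, h, finrank_top] at hle
    omega
  obtain ⟨x, hx, hxx⟩ := exists_mem_orthogonal_apply_self_eq_one hB hs hdisj htop
  have hxv : ∀ u ∈ span K (Set.range v), B x u = 0 := fun u hu => (hs.eq _ _).symm.trans (hx u hu)
  refine ⟨x, fun hmem => ?_, fun i => hxv _ (subset_span (Set.mem_range_self i)), hxx⟩
  simp [hxv x hmem] at hxx

/-- The Gram matrices of two families agree. -/
def SameGram (B : BilinForm K E) (B' : BilinForm K E') {ι : Type*} (v : ι → E) (w : ι → E') :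
    Prop :=
  ∀ i j, B (v i) (v j) = B' (w i) (w j)

theorem SameGram.cons (hs : B.IsSymm) (hs' : B'.IsSymm) {k : ℕ} {v : Fin k → E} {w : Fin k → E'}
    (h : SameGram B B' v w) {x : E} {y : E'} (hxv : ∀ i, B x (v i) = B' y (w i))
    (hxx : B x x = B' y y) :
    SameGram B B' (Fin.cons x v : Fin (k + 1) → E) (Fin.cons y w : Fin (k + 1) → E') := by
  intro i j
  cases i using Fin.cases <;> cases j using Fin.cases <;>
    simp [hxv, hxx, h _ _, hs.eq _ x, hs'.eq _ y]

theorem exists_linearIndependent_cons_sameGram [FiniteDimensional K E] [FiniteDimensional K E']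
    [IsAlgClosed K] [NeZero (2 : K)] (hB : B.Nondegenerate) (hs : B.IsSymm)
    (hB' : B'.Nondegenerate) (hs' : B'.IsSymm) {k : ℕ} {v : Fin k → E} {w : Fin k → E'}
    (hv : LinearIndependent K v) (hw : LinearIndependent K w) (h : SameGram B B' v w)
    (hk : k < finrank K E) (hk' : k < finrank K E') :
    ∃ x y, LinearIndependent K (Fin.cons x v : Fin (k + 1) → E) ∧
      LinearIndependent K (Fin.cons y w : Fin (k + 1) → E') ∧
      SameGram B B' (Fin.cons x v : Fin (k + 1) → E) (Fin.cons y w : Fin (k + 1) → E') := by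
  by_cases hrad : ∃ a : Fin k → K, a ≠ 0 ∧ ∀ i, B (∑ j, a j • v j) (v i) = 0
  · obtain ⟨a, ha, hav⟩ := hrad
    obtain ⟨j₀, hj₀⟩ := Function.ne_iff.1 ha
    have haw : ∀ i, B' (∑ j, a j • w j) (w i) = 0 := fun i => by
      simpa [LinearMap.sum_apply, h _ _] using hav i
    have hac : ∑ i, a i * (Pi.single j₀ (a j₀)⁻¹ : Fin k → K) i = 1 := by
      simpa [Pi.single_apply] using mul_inv_cancel₀ hj₀
    obtain ⟨x, hxv, hx, hxx⟩ := exists_isotropic_notMem_span_apply_eq hB hs hv hav hac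
    obtain ⟨y, hyw, hy, hyy⟩ := exists_isotropic_notMem_span_apply_eq hB' hs' hw haw hac
    exact ⟨x, y, hv.finCons hxv, hw.finCons hyw,
      h.cons hs hs' (fun i => (hx i).trans (hy i).symm) (hxx.trans hyy.symm)⟩
  · have hav : ∀ a : Fin k → K, (∀ i, B (∑ j, a j • v j) (v i) = 0) → a = 0 := fun a ha => by
      by_contra ha₀
      exact hrad ⟨a, ha₀, ha⟩
    have haw : ∀ a : Fin k → K, (∀ i, B' (∑ j, a j • w j) (w i) = 0) → a = 0 := fun a ha =>
      hav a fun i => by simpa [LinearMap.sum_apply, h _ _] using ha i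
    obtain ⟨x, hxv, hx, hxx⟩ := exists_unit_notMem_span_apply_eq_zero hB hs hav
      (by simpa using hk)
    obtain ⟨y, hyw, hy, hyy⟩ := exists_unit_notMem_span_apply_eq_zero hB' hs' haw
      (by simpa using hk')
    exact ⟨x, y, hv.finCons hxv, hw.finCons hyw,
      h.cons hs hs' (fun i => (hx i).trans (hy i).symm) (hxx.trans hyy.symm)⟩

/-- The isometry carrying a basis to a basis with the same Gram matrix. -/
def isometryEquivOfBasis {ι : Type*} (b : Basis ι K E) (b' : Basis ι K E')
    (h : SameGram B B' b b') : B.IsometryEquiv B' where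
  toLinearEquiv := b.equiv b' (Equiv.refl ι)
  map_app' := by
    have hcomp : B'.compl₁₂ (b.equiv b' (Equiv.refl ι)).toLinearMap
        (b.equiv b' (Equiv.refl ι)).toLinearMap = B :=
      LinearMap.BilinForm.ext_basis b fun i j => by simp [h i j]
    exact fun x y => LinearMap.congr_fun₂ hcomp x y

theorem isometryEquivOfBasis_apply {ι : Type*} (b : Basis ι K E) (b' : Basis ι K E')
    (h : SameGram B B' b b') (i : ι) : isometryEquivOfBasis b b' h (b i) = b' i := by
  change b.equiv b' (Equiv.refl ι) (b i) = b' i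
  simp

theorem exists_isometryEquiv_of_sameGram [FiniteDimensional K E] [FiniteDimensional K E']
    [IsAlgClosed K] [NeZero (2 : K)] (hB : B.Nondegenerate) (hs : B.IsSymm)
    (hB' : B'.Nondegenerate) (hs' : B'.IsSymm) (hfin : finrank K E = finrank K E') {k : ℕ}
    {v : Fin k → E} {w : Fin k → E'} (hv : LinearIndependent K v) (hw : LinearIndependent K w)
    (h : SameGram B B' v w) : ∃ g : B.IsometryEquiv B', ∀ i, g (v i) = w i := by
  induction hd : finrank K E - k generalizing k with
  | zero =>
    have hk : k = finrank K E := by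
      have := hv.fintype_card_le_finrank
      rw [Fintype.card_fin] at this
      omega
    let b := basisOfLinearIndependentOfCardEqFinrank' v hv (by simpa using hk)
    let b' := basisOfLinearIndependentOfCardEqFinrank' w hw (by simpa [← hfin] using hk)
    have hbb' : SameGram B B' b b' := by simpa [b, b'] using h
    exact ⟨isometryEquivOfBasis b b' hbb',
      fun i => by simpa [b, b'] using isometryEquivOfBasis_apply b b' hbb' i⟩
  | succ d ih =>
    obtain ⟨x, y, hxv, hyw, hxy⟩ :=
      exists_linearIndependent_cons_sameGram hB hs hB' hs' hv hw h (by omega) (by omega)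
    obtain ⟨g, hg⟩ := ih hxv hyw hxy (by omega)
    exact ⟨g, fun i => by simpa using hg i.succ⟩

theorem notMem_span_range_of_apply_self_ne_zero {ι : Type*} {v : ι → E}
    (hv : ∀ i j, B (v i) (v j) = 0) {e : E} (he : B e e ≠ 0) : e ∉ span K (Set.range v) := by
  intro hmem
  have hleft : ∀ j, B e (v j) = 0 := fun j =>
    (span_le (p := LinearMap.ker (B.flip (v j)))).2 (Set.range_subset_iff.2 fun i => hv i j) hmem
  exact he ((span_le (p := LinearMap.ker (B e))).2 (Set.range_subset_iff.2 hleft) hmem)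

theorem exists_isometryEquiv_fixing_of_isotropic [FiniteDimensional K E] [IsAlgClosed K]
    [NeZero (2 : K)] (hB : B.Nondegenerate) (hs : B.IsSymm) {e : E} (he : B e e ≠ 0) {k : ℕ}
    {v w : Fin k → E} (hv : LinearIndependent K v) (hw : LinearIndependent K w)
    (hvv : ∀ i j, B (v i) (v j) = 0) (hww : ∀ i j, B (w i) (w j) = 0)
    (hvw : ∀ i, B e (v i) = B e (w i)) :
    ∃ g : B.IsometryEquiv B, g e = e ∧ ∀ i, g (v i) = w i := by
  have hgram : SameGram B B v w := fun i j => (hvv i j).trans (hww i j).symm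
  obtain ⟨g, hg⟩ := exists_isometryEquiv_of_sameGram hB hs hB hs rfl
    (hv.finCons (notMem_span_range_of_apply_self_ne_zero hvv he))
    (hw.finCons (notMem_span_range_of_apply_self_ne_zero hww he)) (hgram.cons hs hs hvw rfl)
  exact ⟨g, by simpa using hg 0, fun i => by simpa using hg i.succ⟩

theorem det_isometryEquiv_eq_one_or_eq_neg_one [FiniteDimensional K E] (hB : B.Nondegenerate)
    (g : B.IsometryEquiv B) :
    LinearMap.det g.toLinearEquiv.toLinearMap = 1 ∨
      LinearMap.det g.toLinearEquiv.toLinearMap = -1 := by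
  let b := Module.finBasis K E
  have hgB : B.comp g.toLinearEquiv.toLinearMap g.toLinearEquiv.toLinearMap = B :=
    LinearMap.ext₂ fun x y => g.map_app y x
  have hdet := congrArg Matrix.det (LinearMap.BilinForm.toMatrix_comp b b B
    g.toLinearEquiv.toLinearMap g.toLinearEquiv.toLinearMap)
  rw [hgB, Matrix.det_mul, Matrix.det_mul, Matrix.det_transpose, LinearMap.det_toMatrix] at hdet
  have hne : (LinearMap.BilinForm.toMatrix b B).det ≠ 0 :=
    (LinearMap.BilinForm.nondegenerate_iff_det_ne_zero b).1 hB
  refine mul_self_eq_one_iff.1 (mul_right_cancel₀ hne ?_)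
  linear_combination -hdet

end Witt

/-! ### The form `β` -/

section BetaForm

variable {n : ℕ}

theorem stdVec_apply (n m : ℕ) (k : Fin n) : stdVec n m k = if (k : ℕ) + 1 = m then 1 else 0 := by
  have := k.is_lt
  by_cases h : 1 ≤ m ∧ m ≤ n
  · simp only [stdVec, dif_pos h, Pi.single_apply, Fin.ext_iff]
    exact if_congr (by omega) rfl rfl
  · rw [stdVec, dif_neg h, if_neg (by omega), Pi.zero_apply]

theorem stdVec_succ (k : Fin n) : stdVec n (k + 1) = Pi.single k 1 := by
  ext j
  simp [stdVec_apply, Pi.single_apply, Fin.ext_iff]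

/-- The form `β` as a bilinear form. -/
def betaForm (n : ℕ) : LinearMap.BilinForm ℂ (Fin n → ℂ) :=
  LinearMap.mk₂ ℂ (betaF n)
    (fun x y z => by simp [betaF, add_mul, Finset.sum_add_distrib])
    (fun c x y => by simp [betaF, Finset.mul_sum, mul_assoc])
    (fun x y z => by simp [betaF, mul_add, Finset.sum_add_distrib])
    (fun c x y => by simp [betaF, Finset.mul_sum, mul_left_comm])

theorem betaForm_apply (x y : Fin n → ℂ) : betaForm n x y = ∑ k, x k * y k.rev := rfl

theorem betaForm_isSymm (n : ℕ) : (betaForm n).IsSymm where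
  eq x y := by
    rw [betaForm_apply, betaForm_apply, ← Equiv.sum_comp Fin.revPerm]
    simp [mul_comm]

theorem betaForm_single_right (x : Fin n → ℂ) (k : Fin n) :
    betaForm n x (Pi.single k 1) = x k.rev := by
  simp [betaForm_apply, Pi.single_apply, Fin.rev_eq_iff]

theorem betaForm_single_left (x : Fin n → ℂ) (k : Fin n) :
    betaForm n (Pi.single k 1) x = x k.rev := by
  rw [← betaForm_single_right x, (betaForm_isSymm n).eq]

theorem betaForm_nondegenerate (n : ℕ) : (betaForm n).Nondegenerate := by
  refine (betaForm_isSymm n).isRefl.nondegenerate_iff_separatingLeft.2 fun x hx => ?_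
  ext k
  simpa [betaForm_single_right] using hx (Pi.single k.rev 1)

theorem betaForm_stdVec (a b : ℕ) :
    betaForm n (stdVec n a) (stdVec n b) = if a ∈ Set.Icc 1 n ∧ a + b = n + 1 then 1 else 0 := by
  by_cases ha : a ∈ Set.Icc 1 n
  · obtain ⟨c, hc⟩ : ∃ c : Fin n, (c : ℕ) + 1 = a := ⟨⟨a - 1, by grind⟩, by grind⟩
    rw [← hc, stdVec_succ, betaForm_single_left, stdVec_apply, Fin.val_rev]
    grind
  · have hzero : stdVec n a = 0 := dif_neg ha
    rw [hzero, if_neg fun h => ha h.1, map_zero, LinearMap.zero_apply]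

theorem apply_eq_zero_of_mem_stdSub {k : ℕ} {x : Fin n → ℂ} (hx : x ∈ stdSub n k) {i : Fin n}
    (hi : k ≤ i) : x i = 0 := by
  suffices h : stdSub n k ≤ LinearMap.ker (LinearMap.proj i) from h hx
  refine span_le.2 ?_
  rintro _ ⟨m, ⟨-, hm⟩, rfl⟩
  simp [stdVec_apply, show (i : ℕ) + 1 ≠ m by omega]

theorem single_mem_stdSub (k : Fin n) : Pi.single k 1 ∈ stdSub n (k + 1) :=
  stdVec_succ k ▸ subset_span ⟨k + 1, by simp, rfl⟩

end BetaForm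

/-! ### Isometries preserving the standard flag -/

section Triangular

variable {n : ℕ} (g : (betaForm n).IsometryEquiv (betaForm n))

/-- The orthogonal complement of `U_k` is `U_{n-k}`, so the lower half of a flag determines the
upper half. -/
theorem isometryEquiv_single_apply_eq_zero_of_lt
    (hg : ∀ k, 2 * k ≤ n → (stdSub n k).map g.toLinearEquiv.toLinearMap = stdSub n k)
    {i j : Fin n} (hij : j < i) : g (Pi.single j 1) i = 0 := by
  have hij' : (j : ℕ) < i := hij
  by_cases hj : 2 * ((j : ℕ) + 1) ≤ n
  · refine apply_eq_zero_of_mem_stdSub (k := j + 1) ?_ hij'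
    rw [← hg _ hj]
    exact mem_map_of_mem (single_mem_stdSub j)
  · have hrev := Fin.val_rev i
    have hmem := single_mem_stdSub i.rev
    rw [← hg _ (by omega)] at hmem
    obtain ⟨u, hu, hgu⟩ := hmem
    have hgu' : g u = Pi.single i.rev 1 := hgu
    rw [← Fin.rev_rev i, ← betaForm_single_right (g _), ← hgu', g.map_app, betaForm_single_left]
    exact apply_eq_zero_of_mem_stdSub hu (by rw [Fin.val_rev j]; omega)

theorem isometryEquiv_diag_mul_diag_rev
    (hg : ∀ ⦃i j : Fin n⦄, j < i → g (Pi.single j 1) i = 0) (k : Fin n) :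
    g (Pi.single k 1) k * g (Pi.single k.rev 1) k.rev = 1 := by
  have h : betaForm n (g (Pi.single k 1)) (g (Pi.single k.rev 1)) = 1 := by
    simp [g.map_app, betaForm_single_left]
  rw [betaForm_apply, Finset.sum_eq_single_of_mem k (Finset.mem_univ k)] at h
  · exact h
  · intro m _ hmk
    rcases lt_or_gt_of_ne hmk with hlt | hgt
    · rw [hg (Fin.rev_lt_rev.2 hlt), mul_zero]
    · rw [hg hgt, zero_mul]

/-- The matrix of `g` is triangular, and its diagonal entries in mirrored positions are inverse to
each other. -/
theorem det_eq_one_of_map_stdSub_eq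
    (hg : ∀ k, 2 * k ≤ n → (stdSub n k).map g.toLinearEquiv.toLinearMap = stdSub n k)
    (hfix : ∀ k : Fin n, k.rev = k → g (Pi.single k 1) = Pi.single k 1) :
    LinearMap.det g.toLinearEquiv.toLinearMap = 1 := by
  have hzero : ∀ ⦃i j : Fin n⦄, j < i → g (Pi.single j 1) i = 0 := fun i j =>
    isometryEquiv_single_apply_eq_zero_of_lt g hg
  have hentry : ∀ i j, LinearMap.toMatrix' g.toLinearEquiv.toLinearMap i j = g (Pi.single j 1) i :=
    fun i j => LinearMap.toMatrix'_apply _ i j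
  rw [← LinearMap.det_toMatrix',
    Matrix.det_of_isUpperTriangular fun i j hij => (hentry i j).trans (hzero hij)]
  refine Finset.prod_involution (fun k _ => k.rev) (fun k _ => ?_) (fun k _ hk hrev => hk ?_)
    (fun k _ => Finset.mem_univ _) (fun k _ => Fin.rev_rev k)
  · rw [hentry, hentry, isometryEquiv_diag_mul_diag_rev g hzero]
  · rw [hentry, hfix k hrev, Pi.single_eq_same]

end Triangular

/-! ### The reflection exchanging `F_+` and `F_-` -/

section Reflection

theorem det_funCongrLeft {R ι : Type*} [CommRing R] [Fintype ι] [DecidableEq ι]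
    (σ : Equiv.Perm ι) :
    LinearMap.det (LinearEquiv.funCongrLeft R R σ).toLinearMap = (Equiv.Perm.sign σ : ℤ) := by
  have h : (LinearEquiv.funCongrLeft R R σ).toLinearMap = Matrix.toLin' (σ.permMatrix R) :=
    LinearMap.ext fun x => by
      rw [Matrix.toLin'_apply, Matrix.permMatrix_mulVec]
      rfl
  rw [h, LinearMap.det_toLin', Matrix.det_permutation]

/-- The isometry of `β` permuting the coordinates by a permutation that commutes with
`k ↦ n + 1 - k`. -/
def permIsometry {n : ℕ} (σ : Equiv.Perm (Fin n)) (hσ : ∀ k, σ k.rev = (σ k).rev) :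
    (betaForm n).IsometryEquiv (betaForm n) where
  toLinearEquiv := LinearEquiv.funCongrLeft ℂ ℂ σ
  map_app' x y := by
    rw [betaForm_apply, betaForm_apply, ← Equiv.sum_comp σ fun k => x k * y k.rev]
    exact Finset.sum_congr rfl fun k _ => congrArg (x (σ k) * y ·) (hσ k)

/-- The vector `e_0 = e_{l+1}` of `ℂ^{2l+1}`. -/
abbrev midVec (l : ℕ) : Fin (2 * l + 1) → ℂ := stdVec (2 * l + 1) (l + 1)

variable {l : ℕ}

/-- The reflection of `ℂ^{2l+1}` that swaps `e_l` and `e_{-l}` and fixes the other standard basis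
vectors. -/
def midReflection (hl : 0 < l) :
    (betaForm (2 * l + 1)).IsometryEquiv (betaForm (2 * l + 1)) :=
  permIsometry (Equiv.swap ⟨l - 1, by omega⟩ ⟨l + 1, by omega⟩) fun k => by
    simp only [Equiv.swap_apply_def, Fin.ext_iff]
    grind

theorem midReflection_stdVec (hl : 0 < l) (j : ℕ) :
    midReflection hl (stdVec (2 * l + 1) j) = stdVec (2 * l + 1) (Equiv.swap l (l + 2) j) := by
  ext k
  change stdVec (2 * l + 1) j (Equiv.swap _ _ k) = _
  simp only [stdVec_apply, Equiv.swap_apply_def, Fin.ext_iff]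
  grind

theorem det_midReflection (hl : 0 < l) :
    LinearMap.det (midReflection hl).toLinearEquiv.toLinearMap = -1 := by
  refine (det_funCongrLeft _).trans ?_
  rw [Equiv.Perm.sign_swap (by simp [Fin.ext_iff])]
  simp

theorem midReflection_midVec (hl : 0 < l) : midReflection hl (midVec l) = midVec l := by
  rw [midReflection_stdVec, Equiv.swap_apply_of_ne_of_ne (by omega) (by omega)]

theorem midReflection_wvec (hl : 0 < l) : midReflection hl (wvec l) = wvec l := by
  simp only [wvec, map_add, map_smul, midReflection_midVec]
  simp only [midReflection_stdVec, Equiv.swap_apply_left, Equiv.swap_apply_right]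
  abel

theorem midReflection_repSOVec (hl : 0 < l) {i m : ℕ} (hi : i ≤ l + 1) (hm : m ∈ Set.Icc 1 l) :
    midReflection hl (repSOVec l i m) = repSOVec l (Equiv.swap l (l + 1) i) m := by
  obtain ⟨hm1, hml⟩ := hm
  unfold repSOVec
  simp only [Equiv.swap_apply_def]
  split_ifs <;> simp only [midReflection_stdVec, midReflection_wvec, Equiv.swap_apply_def] <;> grind

end Reflection

section Representatives

variable {l : ℕ}

theorem betaForm_midVec_wvec :
    betaForm (2 * l + 1) (midVec l) (wvec l) = (Real.sqrt 2 : ℂ) * Complex.I := by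
  simp only [wvec, map_add, map_smul, betaForm_stdVec, smul_eq_mul]
  grind

theorem betaForm_midVec_repSOVec {i m : ℕ} (hm : m ∈ Set.Icc 1 l) :
    betaForm (2 * l + 1) (midVec l) (repSOVec l i m) =
      if m = i + 1 then (Real.sqrt 2 : ℂ) * Complex.I else 0 := by
  obtain ⟨hm1, hml⟩ := hm
  unfold repSOVec
  split_ifs <;> simp only [betaForm_midVec_wvec, betaForm_stdVec] <;> grind

theorem betaForm_wvec_wvec (hl : 0 < l) : betaForm (2 * l + 1) (wvec l) (wvec l) = 0 := by
  have hsq : (Real.sqrt 2 : ℂ) ^ 2 = 2 := by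
    exact_mod_cast Real.sq_sqrt zero_le_two
  simp only [wvec, map_add, map_smul, betaForm_stdVec, LinearMap.add_apply, LinearMap.smul_apply,
    smul_eq_mul]
  grind [Complex.I_sq]

theorem betaForm_stdVec_wvec {a : ℕ} (ha : a < l) :
    betaForm (2 * l + 1) (stdVec (2 * l + 1) a) (wvec l) = 0 := by
  simp only [wvec, map_add, map_smul, betaForm_stdVec, smul_eq_mul]
  grind

theorem betaForm_wvec_stdVec {a : ℕ} (ha : a < l) :
    betaForm (2 * l + 1) (wvec l) (stdVec (2 * l + 1) a) = 0 := by
  rw [(betaForm_isSymm _).eq, betaForm_stdVec_wvec ha]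

theorem betaForm_repSOVec_repSOVec {i m m' : ℕ} (hm : m ∈ Set.Icc 1 l) (hm' : m' ∈ Set.Icc 1 l) :
    betaForm (2 * l + 1) (repSOVec l i m) (repSOVec l i m') = 0 := by
  obtain ⟨hm1, hml⟩ := hm
  obtain ⟨hm1', hml'⟩ := hm'
  unfold repSOVec
  split_ifs <;>
    grind [betaForm_stdVec, betaForm_wvec_wvec, betaForm_stdVec_wvec, betaForm_wvec_stdVec]

/-- The `0`-indexed coordinate in which `repSOVec l i (a + 1)` has a `1` and the other vectors of
the family have a `0`. -/
def repPivot (l i a : ℕ) : ℕ :=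
  if i < l then (if a < i then a else if a = i then l - 1 else a - 1)
  else if i = l then a else if a < l - 1 then a else l + 1

theorem repPivot_lt (i : ℕ) {a : ℕ} (ha : a < l) : repPivot l i a < 2 * l + 1 := by
  grind [repPivot]

theorem repSOVec_apply_repPivot (i : ℕ) (a b : Fin l) :
    repSOVec l i (a + 1) ⟨repPivot l i b, repPivot_lt i b.is_lt⟩ = if a = b then 1 else 0 := by
  have := a.is_lt
  have := b.is_lt
  simp only [repSOVec, repPivot, wvec, Fin.ext_iff]
  split_ifs <;> simp [stdVec_apply] <;> grind

theorem linearIndependent_repSOVec (l i : ℕ) :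
    LinearIndependent ℂ fun a : Fin l => repSOVec l i (a + 1) := by
  refine LinearIndependent.of_comp
    (LinearMap.funLeft ℂ ℂ fun b : Fin l => ⟨repPivot l i b, repPivot_lt i b.is_lt⟩) ?_
  convert Pi.linearIndependent_single_one (Fin l) ℂ using 2 with a
  ext b
  simp [LinearMap.funLeft_apply, repSOVec_apply_repPivot, Pi.single_apply, eq_comm]

end Representatives

/-! ### Bases adapted to a flag -/

section Flags

theorem exists_mem_notMem_apply_eq {K E : Type*} [Field K] [AddCommGroup E] [Module K E]
    {W W' : Submodule K E} (hW : W < W') (φ : E →ₗ[K] K) {c : K}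
    (hc : W ≤ LinearMap.ker φ → (c = 0 ↔ W' ≤ LinearMap.ker φ)) : ∃ x ∈ W', x ∉ W ∧ φ x = c := by
  obtain ⟨x, hxW', hxW⟩ := SetLike.exists_of_lt hW
  by_cases hker : W ≤ LinearMap.ker φ
  · by_cases hc0 : c = 0
    · exact ⟨x, hxW', hxW, hc0 ▸ (hc hker).1 hc0 hxW'⟩
    · obtain ⟨y, hyW', hy⟩ := SetLike.not_le_iff_exists.1 fun h => hc0 ((hc hker).2 h)
      refine ⟨(c / φ y) • y, smul_mem _ _ hyW', fun hmem => hc0 ?_, ?_⟩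
      · simpa [div_mul_cancel₀ c hy] using hker hmem
      · simp [div_mul_cancel₀ c hy]
  · obtain ⟨w, hwW, hw⟩ := SetLike.not_le_iff_exists.1 hker
    refine ⟨x - ((φ x - c) / φ w) • w, sub_mem hxW' (smul_mem _ _ (hW.le hwW)),
      fun hmem => hxW ?_, ?_⟩
    · simpa using add_mem hmem (smul_mem W ((φ x - c) / φ w) hwW)
    · simp [div_mul_cancel₀ (φ x - c) hw]

theorem actFlag_isoFlagOf {n l : ℕ} {g : (Fin n → ℂ) ≃ₗ[ℂ] (Fin n → ℂ)} {v w : ℕ → Fin n → ℂ}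
    (h : ∀ m ∈ Set.Icc 1 l, g (v m) = w m) :
    actFlag n g (isoFlagOf n l v) = isoFlagOf n l w := by
  funext k
  rw [actFlag, isoFlagOf, isoFlagOf, map_span, Set.image_image]
  exact congrArg _ (Set.image_congr fun m hm => h m ⟨hm.1, hm.2.trans (min_le_right k l)⟩)

namespace IsIsoFlag

variable {n l : ℕ} {V : ℕ → Submodule ℂ (Fin n → ℂ)} {x : ℕ → Fin n → ℂ}

theorem finrank_eq (hV : IsIsoFlag n l V) {k : ℕ} (hk : k ≤ l) : finrank ℂ (V k) = k := hV.1 k hk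

theorem monotone (hV : IsIsoFlag n l V) : Monotone V := monotone_nat_of_le_succ hV.2.1

theorem betaForm_eq_zero (hV : IsIsoFlag n l V) {u w : Fin n → ℂ} (hu : u ∈ V l) (hw : w ∈ V l) :
    betaForm n u w = 0 :=
  hV.2.2.2 u hu w hw

theorem apply_eq_apply_min (hV : IsIsoFlag n l V) (k : ℕ) : V k = V (min k l) := by
  rcases le_total k l with h | h
  · rw [min_eq_left h]
  · rw [min_eq_right h, hV.2.2.1 k h]

theorem zero_eq_bot (hV : IsIsoFlag n l V) : V 0 = ⊥ :=
  Submodule.finrank_eq_zero.1 (hV.finrank_eq (Nat.zero_le l))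

theorem pred_lt (hV : IsIsoFlag n l V) {m : ℕ} (hm : m ∈ Set.Icc 1 l) : V (m - 1) < V m := by
  refine (hV.monotone (m.sub_le 1)).lt_of_ne fun h => ?_
  have hfin := hV.finrank_eq hm.2
  rw [← h, hV.finrank_eq ((m.sub_le 1).trans hm.2)] at hfin
  have hm1 : 1 ≤ m := hm.1
  omega

theorem exists_forall_le_iff (hV : IsIsoFlag n l V) (H : Submodule ℂ (Fin n → ℂ)) :
    ∃ i ≤ l, ∀ k ≤ l, V k ≤ H ↔ k ≤ i := by
  classical
  have hi : V (Nat.findGreatest (V · ≤ H) l) ≤ H :=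
    Nat.findGreatest_spec (P := (V · ≤ H)) (Nat.zero_le l) (by simp [hV.zero_eq_bot])
  exact ⟨_, Nat.findGreatest_le l, fun k hk =>
    ⟨Nat.le_findGreatest (P := (V · ≤ H)) hk, fun h => (hV.monotone h).trans hi⟩⟩

theorem exists_forall_apply_eq (hV : IsIsoFlag n l V) (φ : (Fin n → ℂ) →ₗ[ℂ] ℂ) {c : ℕ → ℂ}
    (hc : ∀ m ∈ Set.Icc 1 l,
      V (m - 1) ≤ LinearMap.ker φ → (c m = 0 ↔ V m ≤ LinearMap.ker φ)) :
    ∃ x : ℕ → Fin n → ℂ, ∀ m ∈ Set.Icc 1 l, x m ∈ V m ∧ x m ∉ V (m - 1) ∧ φ (x m) = c m := by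
  choose! x hx using fun m hm => exists_mem_notMem_apply_eq (hV.pred_lt hm) φ (hc m hm)
  exact ⟨x, hx⟩

theorem span_image_Icc (hV : IsIsoFlag n l V)
    (hx : ∀ m ∈ Set.Icc 1 l, x m ∈ V m ∧ x m ∉ V (m - 1)) {k : ℕ} (hk : k ≤ l) :
    span ℂ (x '' Set.Icc 1 k) = V k := by
  induction k with
  | zero => simp [hV.zero_eq_bot]
  | succ k ih =>
    have hx' := hx (k + 1) ⟨by omega, hk⟩
    have hspan : span ℂ (x '' Set.Icc 1 (k + 1)) = span ℂ {x (k + 1)} ⊔ V k := by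
      have hIcc : insert (k + 1) (Set.Icc 1 k) = Set.Icc 1 (k + 1) :=
        Set.insert_Icc_right_eq_Icc_succ (Nat.le_add_left 1 k)
      rw [← hIcc, Set.image_insert_eq, span_insert, ih (by omega)]
    have hle : span ℂ {x (k + 1)} ⊔ V k ≤ V (k + 1) :=
      sup_le ((span_singleton_le_iff_mem _ _).2 hx'.1) (hV.monotone k.le_succ)
    have hlt : V k < span ℂ {x (k + 1)} ⊔ V k :=
      right_lt_sup.2 fun h => hx'.2 ((span_singleton_le_iff_mem _ _).1 h)
    rw [hspan]
    refine eq_of_le_of_finrank_le hle ?_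
    have := finrank_lt_finrank_of_lt hlt
    rw [hV.finrank_eq (by omega)] at this
    rw [hV.finrank_eq hk]
    exact this

theorem isoFlagOf_eq (hV : IsIsoFlag n l V)
    (hx : ∀ m ∈ Set.Icc 1 l, x m ∈ V m ∧ x m ∉ V (m - 1)) : isoFlagOf n l x = V := by
  funext k
  rw [isoFlagOf, hV.span_image_Icc hx (min_le_right k l), ← hV.apply_eq_apply_min]

theorem linearIndependent (hV : IsIsoFlag n l V)
    (hx : ∀ m ∈ Set.Icc 1 l, x m ∈ V m ∧ x m ∉ V (m - 1)) :
    LinearIndependent ℂ fun a : Fin l => x (a + 1) := by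
  have hrange : Set.range (fun a : Fin l => x (a + 1)) = x '' Set.Icc 1 l := by
    ext y
    constructor
    · rintro ⟨a, rfl⟩
      exact ⟨a + 1, ⟨by omega, a.is_lt⟩, rfl⟩
    · rintro ⟨m, ⟨hm1, hml⟩, rfl⟩
      exact ⟨⟨m - 1, by omega⟩, by simp [Nat.sub_add_cancel hm1]⟩
  rw [linearIndependent_iff_card_eq_finrank_span, Set.finrank, hrange, hV.span_image_Icc hx le_rfl,
    hV.finrank_eq le_rfl, Fintype.card_fin]

end IsIsoFlag

end Flags

/-! ### `K`-orbits of flags -/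

section Orbits

variable {l : ℕ} {V V' : ℕ → Submodule ℂ (Fin (2 * l + 1) → ℂ)}

/-- The hyperplane `e_0^⊥` of `ℂ^{2l+1}`. -/
abbrev midPerp (l : ℕ) : Submodule ℂ (Fin (2 * l + 1) → ℂ) :=
  LinearMap.ker (betaForm (2 * l + 1) (midVec l))

theorem inKOddOrbit_iff :
    InKOddOrbit l V V' ↔ ∃ g : (betaForm (2 * l + 1)).IsometryEquiv (betaForm (2 * l + 1)),
      LinearMap.det g.toLinearEquiv.toLinearMap = 1 ∧ g (midVec l) = midVec l ∧
        actFlag (2 * l + 1) g.toLinearEquiv V = V' := by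
  constructor
  · rintro ⟨g, ⟨⟨hdet, hg⟩, hmid⟩, hV⟩
    exact ⟨⟨g, hg⟩, hdet, hmid, hV⟩
  · rintro ⟨g, hdet, hmid, hV⟩
    exact ⟨g.toLinearEquiv, ⟨⟨hdet, g.map_app'⟩, hmid⟩, hV⟩

theorem InKOddOrbit.le_midPerp_iff (h : InKOddOrbit l V V') (k : ℕ) :
    V' k ≤ midPerp l ↔ V k ≤ midPerp l := by
  obtain ⟨g, -, hmid, rfl⟩ := inKOddOrbit_iff.1 h
  have hcomap : (midPerp l).comap g.toLinearEquiv.toLinearMap = midPerp l := by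
    ext x
    have hx : betaForm _ (midVec l) (g x) = betaForm _ (midVec l) x := by
      conv_lhs => rw [← hmid, g.map_app]
    simp only [mem_comap, LinearMap.mem_ker, ← hx]
    rfl
  rw [actFlag, map_le_iff_le_comap, hcomap]

theorem repSOFlag_le_midPerp_iff (i : ℕ) {k : ℕ} (hk : k ≤ l) :
    repSOFlag l i k ≤ midPerp l ↔ k ≤ i := by
  have hrep : ∀ m ∈ Set.Icc 1 k, repSOVec l i m ∈ midPerp l ↔ m ≠ i + 1 := fun m hm => by
    have hml : m ∈ Set.Icc 1 l := ⟨hm.1, hm.2.trans hk⟩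
    simp [betaForm_midVec_repSOVec hml]
  rw [repSOFlag, isoFlagOf, min_eq_left hk, span_le, Set.image_subset_iff]
  constructor
  · intro h
    by_contra! hik
    exact (hrep (i + 1) ⟨by omega, hik⟩).1 (h ⟨by omega, hik⟩) rfl
  · intro hki m hm
    exact (hrep m hm).2 (by have := hm.2; omega)

theorem repSOFlag_self_eq_stdSub {k : ℕ} (hk : k ≤ l) :
    repSOFlag l l k = stdSub (2 * l + 1) k := by
  have hrep : ∀ m ∈ Set.Icc 1 k, repSOVec l l m = stdVec (2 * l + 1) m := fun m ⟨hm1, hmk⟩ => by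
    rw [repSOVec, if_neg (by omega), if_pos rfl]
  rw [repSOFlag, isoFlagOf, stdSub, min_eq_left hk, Set.image_congr hrep]

theorem actFlag_midReflection_repSOFlag (hl : 0 < l) {i : ℕ} (hi : i ≤ l + 1) :
    actFlag (2 * l + 1) (midReflection hl).toLinearEquiv (repSOFlag l i) =
      repSOFlag l (Equiv.swap l (l + 1) i) :=
  actFlag_isoFlagOf fun _ hm => midReflection_repSOVec hl hi hm

theorem actFlag_trans {n : ℕ} (g h : (Fin n → ℂ) ≃ₗ[ℂ] (Fin n → ℂ))
    (V : ℕ → Submodule ℂ (Fin n → ℂ)) :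
    actFlag n (g.trans h) V = actFlag n h (actFlag n g V) :=
  funext fun k => map_comp g.toLinearMap h.toLinearMap (V k)

theorem actFlag_refl (n : ℕ) (V : ℕ → Submodule ℂ (Fin n → ℂ)) :
    actFlag n (LinearEquiv.refl ℂ _) V = V :=
  funext fun k => map_id (V k)

theorem det_eq_of_actFlag_repSOFlag_self_eq
    {g h : (betaForm (2 * l + 1)).IsometryEquiv (betaForm (2 * l + 1))}
    (hg : g (midVec l) = midVec l) (hh : h (midVec l) = midVec l)
    (hgh : actFlag (2 * l + 1) g.toLinearEquiv (repSOFlag l l) =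
      actFlag (2 * l + 1) h.toLinearEquiv (repSOFlag l l)) :
    LinearMap.det g.toLinearEquiv.toLinearMap = LinearMap.det h.toLinearEquiv.toLinearMap := by
  have hflag : actFlag (2 * l + 1) (g.toLinearEquiv.trans h.toLinearEquiv.symm) (repSOFlag l l) =
      repSOFlag l l := by
    rw [actFlag_trans, hgh, ← actFlag_trans, LinearEquiv.self_trans_symm, actFlag_refl]
  have hmid : (g.trans h.symm) (midVec l) = midVec l :=
    (congrArg h.symm (hg.trans hh.symm)).trans (h.toLinearEquiv.symm_apply_apply _)
  have hdet : LinearMap.det (g.toLinearEquiv.trans h.toLinearEquiv.symm).toLinearMap = 1 := by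
    refine det_eq_one_of_map_stdSub_eq (g.trans h.symm) (fun k hk => ?_) fun k hk => ?_
    · rw [← repSOFlag_self_eq_stdSub (by omega)]
      exact congrFun hflag k
    · have hkl : (k : ℕ) = l := by
        have := Fin.val_rev k
        rw [hk] at this
        omega
      rw [← stdVec_succ, hkl, hmid]
  have hh_det := LinearEquiv.det_symm_mul_det h.toLinearEquiv
  rw [LinearEquiv.coe_trans, LinearMap.det_comp] at hdet
  exact mul_left_cancel₀ (left_ne_zero_of_mul_eq_one hdet) (hdet.trans hh_det.symm)

theorem not_inKOddOrbit_repSOFlag_succ (hl : 0 < l) (h : InKOddOrbit l (repSOFlag l l) V) :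
    ¬InKOddOrbit l (repSOFlag l (l + 1)) V := by
  intro h'
  obtain ⟨g, hg, hgmid, rfl⟩ := inKOddOrbit_iff.1 h
  obtain ⟨g', hg', hgmid', hgg'⟩ := inKOddOrbit_iff.1 h'
  let s := midReflection hl
  have hflag : actFlag (2 * l + 1) (s.trans g').toLinearEquiv (repSOFlag l l) =
      actFlag (2 * l + 1) g.toLinearEquiv (repSOFlag l l) := by
    rw [← hgg']
    refine (actFlag_trans _ _ _).trans (congrArg _ ?_)
    rw [actFlag_midReflection_repSOFlag hl (by omega), Equiv.swap_apply_left]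
  have hmid : (s.trans g') (midVec l) = midVec l :=
    (congrArg g' (midReflection_midVec hl)).trans hgmid'
  have hdet := det_eq_of_actFlag_repSOFlag_self_eq hmid hgmid hflag
  have hdet' : LinearMap.det (s.trans g').toLinearEquiv.toLinearMap = -1 := by
    refine (LinearMap.det_comp _ _).trans ?_
    rw [hg', det_midReflection, one_mul]
  rw [hg, hdet'] at hdet
  norm_num at hdet

theorem eq_of_inKOddOrbit_repSOFlag (hl : 0 < l) {i j : ℕ} (hi : i ≤ l + 1) (hj : j ≤ l + 1)
    (hiV : InKOddOrbit l (repSOFlag l i) V) (hjV : InKOddOrbit l (repSOFlag l j) V) : i = j := by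
  have hij : ∀ k ≤ l, k ≤ i ↔ k ≤ j := fun k hk => by
    rw [← repSOFlag_le_midPerp_iff i hk, ← repSOFlag_le_midPerp_iff j hk,
      ← hiV.le_midPerp_iff, hjV.le_midPerp_iff]
  by_contra hne
  have hcases : i = l ∧ j = l + 1 ∨ i = l + 1 ∧ j = l := by
    have := hij i
    have := hij j
    have := hij l
    omega
  rcases hcases with ⟨rfl, rfl⟩ | ⟨rfl, rfl⟩
  · exact not_inKOddOrbit_repSOFlag_succ hl hiV hjV
  · exact not_inKOddOrbit_repSOFlag_succ hl hjV hiV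

theorem IsIsoFlag.exists_isometryEquiv_actFlag_repSOFlag_eq
    (hV : IsIsoFlag (2 * l + 1) l V) :
    ∃ i ≤ l, ∃ g : (betaForm (2 * l + 1)).IsometryEquiv (betaForm (2 * l + 1)),
      g (midVec l) = midVec l ∧ actFlag (2 * l + 1) g.toLinearEquiv (repSOFlag l i) = V := by
  obtain ⟨i, hi, hVi⟩ := hV.exists_forall_le_iff (midPerp l)
  obtain ⟨x, hx⟩ := hV.exists_forall_apply_eq (betaForm _ (midVec l))
    (c := fun m => betaForm _ (midVec l) (repSOVec l i m)) fun m hm => by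
      have hml : m ≤ l := hm.2
      rw [hVi m hml, hVi (m - 1) (by omega), betaForm_midVec_repSOVec hm]
      have : (Real.sqrt 2 : ℂ) * Complex.I ≠ 0 := by simp
      grind
  have hxV : ∀ m ∈ Set.Icc 1 l, x m ∈ V m ∧ x m ∉ V (m - 1) := fun m hm =>
    ⟨(hx m hm).1, (hx m hm).2.1⟩
  have hIcc : ∀ a : Fin l, (a : ℕ) + 1 ∈ Set.Icc 1 l := fun a => ⟨by omega, a.is_lt⟩
  have hmid : betaForm _ (midVec l) (midVec l) ≠ 0 := by
    rw [betaForm_stdVec]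
    grind
  have hxl : ∀ a : Fin l, x (a + 1) ∈ V l := fun a =>
    hV.monotone a.is_lt (hx _ (hIcc a)).1
  obtain ⟨g, hg, hgx⟩ := exists_isometryEquiv_fixing_of_isotropic (betaForm_nondegenerate _)
    (betaForm_isSymm _) hmid (linearIndependent_repSOVec l i) (hV.linearIndependent hxV)
    (fun a b => betaForm_repSOVec_repSOVec (hIcc a) (hIcc b))
    (fun a b => hV.betaForm_eq_zero (hxl a) (hxl b)) fun a => (hx _ (hIcc a)).2.2.symm
  refine ⟨i, hi, g, hg, (actFlag_isoFlagOf fun m hm => ?_).trans (hV.isoFlagOf_eq hxV)⟩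
  simpa [Nat.sub_add_cancel hm.1] using hgx ⟨m - 1, by have := hm.1; have := hm.2; omega⟩

theorem IsIsoFlag.exists_inKOddOrbit_repSOFlag (hl : 0 < l) (hV : IsIsoFlag (2 * l + 1) l V) :
    ∃ i ≤ l + 1, InKOddOrbit l (repSOFlag l i) V := by
  obtain ⟨i, hi, g, hg, rfl⟩ := hV.exists_isometryEquiv_actFlag_repSOFlag_eq
  rcases det_isometryEquiv_eq_one_or_eq_neg_one (betaForm_nondegenerate _) g with hdet | hdet
  · exact ⟨i, hi.trans l.le_succ, inKOddOrbit_iff.2 ⟨g, hdet, hg, rfl⟩⟩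
  · refine ⟨Equiv.swap l (l + 1) i, by grind,
      inKOddOrbit_iff.2 ⟨(midReflection hl).trans g, ?_, ?_, ?_⟩⟩
    · refine (LinearMap.det_comp _ _).trans ?_
      rw [hdet, det_midReflection, neg_one_mul, neg_neg]
    · exact (congrArg g (midReflection_midVec hl)).trans hg
    · refine (actFlag_trans _ _ _).trans (congrArg _ ?_)
      rw [actFlag_midReflection_repSOFlag hl (by grind),
        Equiv.swap_apply_self]

end Orbits

/-- Every maximal isotropic flag in `ℂ^{2l+1}` lies in the `K`-orbit of exactly one
of the `l+2` flags `F_0, …, F_{l-1}, F_+, F_-` (indexed here by `i ≤ l + 1`, with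
`i = l` giving `F_+` and `i = l + 1` giving `F_-`). -/
theorem stmt_3 (l : ℕ) (hl : 2 ≤ l) (V : ℕ → Submodule ℂ (Fin (2 * l + 1) → ℂ))
    (hV : IsIsoFlag (2 * l + 1) l V) :
    ∃! i : ℕ, i ≤ l + 1 ∧ InKOddOrbit l (repSOFlag l i) V := by
  have hl₀ : 0 < l := by omega
  obtain ⟨i, hi, hiV⟩ := hV.exists_inKOddOrbit_repSOFlag hl₀
  exact ⟨i, ⟨hi, hiV⟩, fun j ⟨hj, hjV⟩ => eq_of_inKOddOrbit_repSOFlag hl₀ hj hi hjV hiV⟩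
end
end
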